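/- arXiv:2011.02847 — 3 statements merged into one kernel-verified Lean document; each statement's English description precedes it below -/
import Mathlib

section
/- For each integer k ≥ 2 and each complex number s with Re s > 0 and s ≠ 1, one has ∫₀¹ f_k(x) x^{s−1} dx = ((k^{−1} − k^{−s})/s) · ζ(s). -/
/-!
On `(1, ∞)` the function `f k` vanishes, so the integral over `(0, 1]` is the Mellin transform of
`f k`. Put `u x = ⌊1/x⌋`, so that `f k x = u x / k - u (k x)`.

For `Re s > 1` Abel summation gives `ζ(s) = s ∫₁^∞ ⌊t⌋ t^{-s-1} dt`, and `t = 1/x` turns this into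
`mellin u s = ζ(s) / s` (`mellin_floorInv`). Linearity and the scaling rule
`mellin (u (k ·)) s = k^{-s} mellin u s` yield the formula there (`mellin_f_of_one_lt_re`).

Each term of `f k` is of size `1/x` near `0`, but these leading terms cancel and `|f k| ≤ 1`.
Hence the Mellin transform of `f k` is holomorphic on `Re s > 0`
(`differentiableAt_mellin_f`), and the identity theorem on this half-plane, applied after
multiplication by `s (s - 1)` so that both sides are holomorphic at `s = 1`, extends the formula.
-/

open MeasureTheory

/-- `f k x = (1/k)⌊1/x⌋ − ⌊1/(kx)⌋`. -/
noncomputable def f (k : ℕ) (x : ℝ) : ℝ := (⌊1/x⌋ : ℝ) / k - (⌊1/(k*x)⌋ : ℝ)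

open Filter Topology Set Asymptotics

/-- The function `x ↦ ⌊1/x⌋`, complex-valued so that its Mellin transform makes sense. -/
noncomputable def floorInv (x : ℝ) : ℂ := ((⌊1 / x⌋ : ℝ) : ℂ)

lemma floorInv_of_one_lt {x : ℝ} (hx : 1 < x) : floorInv x = 0 := by
  have h : ⌊1 / x⌋ = 0 := by
    rw [Int.floor_eq_zero_iff]
    have hx0 : 0 < x := by linarith
    exact ⟨by positivity, (div_lt_one hx0).mpr hx⟩
  rw [floorInv, h]
  simp

lemma f_eq_floorInv (k : ℕ) (x : ℝ) :
    (f k x : ℂ) = (k : ℂ)⁻¹ • floorInv x - floorInv (k * x) := by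
  simp only [f, floorInv, smul_eq_mul]
  push_cast
  ring

lemma f_of_one_lt {k : ℕ} (hk : 2 ≤ k) {x : ℝ} (hx : 1 < x) : (f k x : ℂ) = 0 := by
  have hk' : (2 : ℝ) ≤ k := by exact_mod_cast hk
  rw [f_eq_floorInv, floorInv_of_one_lt hx, floorInv_of_one_lt (by nlinarith)]
  simp

lemma norm_f_le_one {k : ℕ} (hk : 2 ≤ k) (x : ℝ) : ‖(f k x : ℂ)‖ ≤ 1 := by
  have hk' : (2 : ℝ) ≤ k := by exact_mod_cast hk
  have hk0 : (0 : ℝ) < k := by linarith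
  rw [Complex.norm_real, Real.norm_eq_abs, f,
    show 1 / ((k : ℝ) * x) = (1 / x) / k by rw [mul_comm, div_div]]
  generalize 1 / x = t
  have h1 : (⌊t⌋ : ℝ) / k ≤ t / k := by gcongr; exact Int.floor_le t
  have h2 : (t - 1) / k ≤ (⌊t⌋ : ℝ) / k := by gcongr; exact (Int.sub_one_lt_floor t).le
  have h3 := Int.floor_le (t / k)
  have h4 := Int.sub_one_lt_floor (t / k)
  have h5 : 1 / (k : ℝ) ≤ 1 := by rw [div_le_one hk0]; linarith
  rw [sub_div] at h2
  rw [abs_le]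
  constructor <;> linarith

lemma locallyIntegrableOn_floorInv {c : ℝ} (hc : 0 < c) :
    LocallyIntegrableOn (fun x ↦ floorInv (c * x)) (Ioi 0) := by
  rw [locallyIntegrableOn_iff isOpen_Ioi.isLocallyClosed]
  intro K hK hKc
  have h : AntitoneOn (fun x : ℝ ↦ (⌊1 / (c * x)⌋ : ℝ)) K := by
    intro x hx y hy hxy
    have hx0 : 0 < x := hK hx
    simp only
    gcongr
  exact (h.integrableOn_isCompact hKc).ofReal

lemma locallyIntegrableOn_f {k : ℕ} (hk : 2 ≤ k) :
    LocallyIntegrableOn (fun x ↦ (f k x : ℂ)) (Ioi 0) := by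
  have h1 := locallyIntegrableOn_floorInv one_pos
  have h2 := locallyIntegrableOn_floorInv (c := k) (by positivity)
  simp only [one_mul] at h1
  simp_rw [f_eq_floorInv]
  exact (h1.smul (k : ℂ)⁻¹).sub h2

/-- Boundedness near `0` and vanishing near `∞` give holomorphy on the whole right half-plane,
although each of the two terms of `f k` only has a Mellin transform for `Re s > 1`. -/
lemma differentiableAt_mellin_f {k : ℕ} (hk : 2 ≤ k) {s : ℂ} (hs : 0 < s.re) :
    DifferentiableAt ℂ (mellin fun x ↦ (f k x : ℂ)) s := by
  refine mellin_differentiableAt_of_isBigO_rpow (a := s.re + 1) (b := 0)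
    (locallyIntegrableOn_f hk) ?_ (by linarith) ?_ hs
  · refine (EventuallyEq.trans_isBigO ?_ (isBigO_zero _ _))
    filter_upwards [eventually_gt_atTop 1] with x hx using f_of_one_lt hk hx
  · refine IsBigO.of_bound 1 (Eventually.of_forall fun x ↦ ?_)
    simpa using norm_f_le_one hk x

lemma mellinConvergent_floorInv {s : ℂ} (hs : 1 < s.re) : MellinConvergent floorInv s := by
  have h1 := locallyIntegrableOn_floorInv one_pos
  simp only [one_mul] at h1
  refine mellinConvergent_of_isBigO_rpow (a := s.re + 1) (b := 1) h1 ?_ (by linarith) ?_ hs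
  · refine (EventuallyEq.trans_isBigO ?_ (isBigO_zero _ _))
    filter_upwards [eventually_gt_atTop 1] with x hx using floorInv_of_one_lt hx
  · refine IsBigO.of_bound 1 ?_
    filter_upwards [self_mem_nhdsWithin] with x hx
    have hx0 : 0 < x := hx
    have h0 : (0 : ℝ) ≤ ⌊1 / x⌋ := by
      exact_mod_cast Int.floor_nonneg.mpr (by positivity : 0 ≤ 1 / x)
    rw [floorInv, Complex.norm_real, Real.norm_of_nonneg h0, Real.rpow_neg_one, norm_inv,
      Real.norm_of_nonneg hx0.le, one_mul, ← one_div]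
    exact Int.floor_le _

lemma mellin_floorInv {s : ℂ} (hs : 1 < s.re) : mellin floorInv s = riemannZeta s / s := by
  have hs0 : s ≠ 0 := by rintro rfl; norm_num at hs
  have hO : (fun n : ℕ ↦ ∑ i ∈ Finset.Icc 1 n, ‖(1 : ℕ → ℂ) i‖) =O[atTop]
      fun n ↦ (n : ℝ) ^ (1 : ℝ) := by
    refine IsBigO.of_bound 1 (Eventually.of_forall fun n ↦ ?_)
    simp
  have hL := LSeries_eq_mul_integral' 1 zero_le_one hs hO
  rw [LSeries_one_eq_riemannZeta hs] at hL
  have hinv : floorInv = fun t ↦ (fun y : ℝ ↦ ((⌊y⌋ : ℝ) : ℂ)) t⁻¹ := by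
    funext t; simp [floorInv]
  rw [hL, mul_div_cancel_left₀ _ hs0, hinv,
    mellin_comp_inv (fun y : ℝ ↦ ((⌊y⌋ : ℝ) : ℂ)), mellin,
    ← integral_Ici_eq_integral_Ioi (x := (1 : ℝ))]
  rw [setIntegral_eq_of_subset_of_forall_sdiff_eq_zero (s := Ici (1 : ℝ)) measurableSet_Ioi
    (Ici_subset_Ioi.mpr one_pos)]
  · refine setIntegral_congr_fun measurableSet_Ici fun t ht ↦ ?_
    have ht0 : (0 : ℝ) ≤ t := zero_le_one.trans ht
    have hfl : ((⌊t⌋ : ℝ) : ℂ) = (⌊t⌋₊ : ℂ) := by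
      rw [← natCast_floor_eq_intCast_floor ht0]; simp
    simp only [hfl, smul_eq_mul, Pi.one_apply, Finset.sum_const, Nat.card_Icc,
      Nat.add_sub_cancel, nsmul_eq_mul, mul_one]
    rw [mul_comm, neg_add']
  · intro x hx
    have h : ⌊x⌋ = 0 := by
      rw [Int.floor_eq_zero_iff]
      exact ⟨le_of_lt hx.1, not_le.mp hx.2⟩
    simp [h]

lemma mellin_f_of_one_lt_re {k : ℕ} (hk : 2 ≤ k) {s : ℂ} (hs : 1 < s.re) :
    mellin (fun x ↦ (f k x : ℂ)) s = ((k : ℂ)⁻¹ - (k : ℂ) ^ (-s)) / s * riemannZeta s := by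
  have hk0 : (0 : ℝ) < k := by positivity
  have hc := mellinConvergent_floorInv hs
  have hc1 := hasMellin_const_smul hc (k : ℂ)⁻¹
  have hc2 := (MellinConvergent.comp_mul_left hk0).mpr hc
  simp_rw [f_eq_floorInv]
  rw [(hasMellin_sub hc1.1 hc2).2, hc1.2, mellin_comp_mul_left _ _ hk0, mellin_floorInv hs]
  simp only [smul_eq_mul, Complex.ofReal_natCast]
  ring

/-- Mellin transform of `f k`:
`∫₀¹ f_k(x) x^{s−1} dx = ((k⁻¹ − k^{−s})/s)·ζ(s)` for `Re s > 0`, `s ≠ 1`. -/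
theorem stmt_3 (k : ℕ) (hk : 2 ≤ k) (s : ℂ) (hs : 0 < s.re) (hs1 : s ≠ 1) :
    ∫ x in Set.Ioc (0:ℝ) 1, (f k x : ℂ) * (x : ℂ) ^ (s - 1) =
      ((k : ℂ)⁻¹ - (k : ℂ) ^ (-s)) / s * riemannZeta s := by
  have hs0 : s ≠ 0 := by rintro rfl; simp at hs
  have hkc : (k : ℂ) ≠ 0 := by exact_mod_cast (by omega : k ≠ 0)
  have hint : ∫ x in Set.Ioc (0:ℝ) 1, (f k x : ℂ) * (x : ℂ) ^ (s - 1) =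
      mellin (fun x ↦ (f k x : ℂ)) s := by
    rw [mellin, setIntegral_eq_of_subset_of_forall_sdiff_eq_zero (s := Ioc (0 : ℝ) 1)
      measurableSet_Ioi Ioc_subset_Ioi_self]
    · simp only [smul_eq_mul, mul_comm]
    · intro x hx
      have hx1 : 1 < x := by
        by_contra! h
        exact hx.2 ⟨hx.1, h⟩
      simp [f_of_one_lt hk hx1]
  have hU : IsOpen {z : ℂ | 0 < z.re} := isOpen_lt continuous_const Complex.continuous_re
  have hF : AnalyticOnNhd ℂ (fun z ↦ z * (z - 1) * mellin (fun x ↦ (f k x : ℂ)) z)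
      {z : ℂ | 0 < z.re} := by
    refine DifferentiableOn.analyticOnNhd (fun z hz ↦ ?_) hU
    have := differentiableAt_mellin_f hk hz
    exact DifferentiableAt.differentiableWithinAt (by fun_prop)
  -- `riemannZeta₁` is the entire function extending `(z - 1) ζ(z)`.
  have hG : AnalyticOnNhd ℂ (fun z ↦ ((k : ℂ)⁻¹ - (k : ℂ) ^ (-z)) * riemannZeta₁ z)
      {z : ℂ | 0 < z.re} := by
    refine DifferentiableOn.analyticOnNhd (fun z hz ↦ ?_) hU
    have h1 : DifferentiableAt ℂ (fun z : ℂ ↦ (k : ℂ) ^ (-z)) z :=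
      (differentiableAt_id.neg).const_cpow (Or.inl hkc)
    have h2 := differentiable_riemannZeta₁ z
    exact (((differentiableAt_const _).sub h1).mul h2).differentiableWithinAt
  have hpre : IsPreconnected {z : ℂ | 0 < z.re} := (convex_halfSpace_re_gt 0).isPreconnected
  have heq := hF.eqOn_of_preconnected_of_eventuallyEq hG hpre (z₀ := 2) (by simp) (by
    have hV : {z : ℂ | 1 < z.re} ∈ 𝓝 (2 : ℂ) :=
      (isOpen_lt continuous_const Complex.continuous_re).mem_nhds (by simp)
    filter_upwards [hV] with z hz
    have hz : 1 < z.re := hz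
    have hz0 : z ≠ 0 := by rintro rfl; norm_num at hz
    have hz1 : z ≠ 1 := by rintro rfl; norm_num at hz
    have hz1' : z - 1 ≠ 0 := sub_ne_zero.mpr hz1
    rw [mellin_f_of_one_lt_re hk hz, riemannZeta_eq_inv_sub_mul hz1]
    field_simp) hs
  have hs1' : s - 1 ≠ 0 := sub_ne_zero.mpr hs1
  rw [hint, riemannZeta_eq_inv_sub_mul hs1]
  apply mul_left_cancel₀ (mul_ne_zero hs0 hs1')
  refine Eq.trans heq ?_
  field_simp
end

section
/- For every integer k ≥ 2, one has ⟨f_k, 1⟩ = ∫₀¹ f_k(x) dx = (log k)/k. -/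
/-!
For `0 < ε`, the substitution `y = k * x` turns `∫ x in ε..1, ⌊1/(k*x)⌋` into
`(1/k) ∫ y in k*ε..1, ⌊1/y⌋`, since `⌊1/y⌋` vanishes on `(1, k]`. Hence
`∫ x in ε..1, f k x = (1/k) ∫ y in ε..k*ε, ⌊1/y⌋` (`integral_f_eq`). As `1/y - 1 ≤ ⌊1/y⌋ ≤ 1/y`,
the last integral lies between `log k - (k-1) * ε` and `log k` (`integral_floor_bounds`), so it
tends to `log k` as `ε → 0+`. Since `f k` is bounded and measurable, the left side tends to the
integral over `(0, 1]`.
-/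

open MeasureTheory

lemma floor_inv_intervalIntegrable {a b : ℝ} (ha : 0 < a) (hb : 0 < b) :
    IntervalIntegrable (fun y : ℝ => (⌊1/y⌋ : ℝ)) volume a b := by
  apply AntitoneOn.intervalIntegrable
  intro x hx y _ hxy
  have hx0 : 0 < x := lt_of_lt_of_le (lt_min ha hb) hx.1
  have : ⌊1/y⌋ ≤ ⌊1/x⌋ := Int.floor_mono (one_div_le_one_div_of_le hx0 hxy)
  exact Int.cast_le.2 this

lemma measurable_f (k : ℕ) : Measurable (f k) := by
  unfold f
  have h1 : Measurable (fun x : ℝ => (⌊1/x⌋ : ℝ)) :=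
    measurable_from_top.comp (Int.measurable_floor.comp (measurable_const.div measurable_id))
  have h2 : Measurable (fun x : ℝ => (⌊1/(k*x)⌋ : ℝ)) :=
    measurable_from_top.comp (Int.measurable_floor.comp
      (measurable_const.div (measurable_const.mul measurable_id)))
  exact (h1.div_const _).sub h2

/-- Since `1/(k*x) = (1/x)/k`, the main terms cancel and
`f k x = {1/(k*x)} - {1/x}/k` is a difference of two numbers in `[0, 1]`. -/
lemma abs_f_le (k : ℕ) (hk : 2 ≤ k) (x : ℝ) : |f k x| ≤ 1 := by
  have hk' : (1:ℝ) ≤ k := by exact_mod_cast (by omega : 1 ≤ k)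
  have h : f k x = Int.fract (1/(k*x)) - Int.fract (1/x) / k := by
    have e : 1/(k*x) = 1/x/k := by rw [div_div, mul_comm]
    unfold f Int.fract
    rw [e]; ring
  have a1 := Int.fract_nonneg (1/(k*x))
  have a2 := (Int.fract_lt_one (1/(k*x))).le
  have b1 : 0 ≤ Int.fract (1/x) / k := div_nonneg (Int.fract_nonneg _) (by linarith)
  have b2 : Int.fract (1/x) / k ≤ 1 :=
    div_le_one_of_le₀ ((Int.fract_lt_one _).le.trans hk') (by linarith)
  rw [h, abs_le]
  constructor <;> linarith

lemma integral_f_eq (k : ℕ) (hk : 2 ≤ k) {ε : ℝ} (hε : 0 < ε) :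
    ∫ x in ε..1, f k x = (∫ y in ε..k*ε, (⌊1/y⌋ : ℝ)) / k := by
  have hk1 : (1:ℝ) ≤ k := by exact_mod_cast (by omega : 1 ≤ k)
  have hk0 : (0:ℝ) < k := by linarith
  have hkε : 0 < k * ε := by positivity
  have hI {a b : ℝ} (ha : 0 < a) (hb : 0 < b) := floor_inv_intervalIntegrable ha hb
  have hcomp : IntervalIntegrable (fun x : ℝ => (⌊1/(k*x)⌋ : ℝ)) volume ε 1 := by
    apply AntitoneOn.intervalIntegrable
    intro x hx y _ hxy
    have hx0 : 0 < x := lt_of_lt_of_le (lt_min hε one_pos) hx.1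
    have : ⌊1/(k*y)⌋ ≤ ⌊1/(k*x)⌋ := Int.floor_mono
      (one_div_le_one_div_of_le (by positivity) (by gcongr))
    exact Int.cast_le.2 this
  have hsub : ∫ x in ε..1, (⌊1/(k*x)⌋ : ℝ) = (k:ℝ)⁻¹ * ∫ y in k*ε..k*1, (⌊1/y⌋ : ℝ) := by
    have := intervalIntegral.integral_comp_mul_left (a := ε) (b := 1)
      (fun y : ℝ => (⌊1/y⌋ : ℝ)) hk0.ne'
    simpa only [smul_eq_mul] using this
  have hzero : ∫ y in (1:ℝ)..k, (⌊1/y⌋ : ℝ) = 0 := by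
    apply intervalIntegral.integral_zero_ae
    refine Filter.Eventually.of_forall fun y hy => ?_
    rw [Set.uIoc_of_le hk1] at hy
    have hy0 : 0 < y := one_pos.trans hy.1
    have : ⌊1/y⌋ = 0 := by
      rw [Int.floor_eq_zero_iff]
      exact ⟨by positivity, (div_lt_one hy0).2 hy.1⟩
    simp only [this, Int.cast_zero]
  have s1 := intervalIntegral.integral_add_adjacent_intervals (hI hε hkε) (hI hkε one_pos)
  have s2 := intervalIntegral.integral_add_adjacent_intervals (hI hkε one_pos) (hI one_pos hk0)
  unfold f
  rw [intervalIntegral.integral_sub ((hI hε one_pos).div_const _) hcomp,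
    intervalIntegral.integral_div, hsub, mul_one, ← s1, ← s2, hzero]
  ring

lemma integral_floor_bounds (k : ℕ) (hk : 2 ≤ k) {ε : ℝ} (hε : 0 < ε) :
    Real.log k - (k - 1) * ε ≤ ∫ y in ε..k*ε, (⌊1/y⌋ : ℝ) ∧
      ∫ y in ε..k*ε, (⌊1/y⌋ : ℝ) ≤ Real.log k := by
  have hk1 : (1:ℝ) ≤ k := by exact_mod_cast (by omega : 1 ≤ k)
  have hk0 : (0:ℝ) < k := by linarith
  have hkε : 0 < k * ε := by positivity
  have hle : ε ≤ k * ε := by nlinarith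
  have hI := floor_inv_intervalIntegrable hε hkε
  have hlog : ∫ y in ε..k*ε, 1/y = Real.log k := by
    rw [integral_one_div_of_pos hε hkε, mul_div_cancel_right₀ _ hε.ne']
  have hinv : IntervalIntegrable (fun y : ℝ => 1/y) volume ε (k*ε) := by
    apply AntitoneOn.intervalIntegrable
    intro x hx y _ hxy
    exact one_div_le_one_div_of_le (lt_of_lt_of_le (lt_min hε hkε) hx.1) hxy
  constructor
  · have h := intervalIntegral.integral_mono_on hle (hinv.sub intervalIntegrable_const) hI
      (fun y _ => (Int.sub_one_lt_floor (1/y)).le)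
    rw [intervalIntegral.integral_sub hinv intervalIntegrable_const, hlog,
      intervalIntegral.integral_const, smul_eq_mul] at h
    linarith
  · rw [← hlog]
    exact intervalIntegral.integral_mono_on hle hI hinv (fun y _ => Int.floor_le _)

/-- `⟨f_k, 1⟩ = ∫₀¹ f_k(x) dx = (log k)/k`. -/
theorem stmt_5 (k : ℕ) (hk : 2 ≤ k) :
    ∫ x in Set.Ioc (0:ℝ) 1, f k x = Real.log k / k := by
  rw [← intervalIntegral.integral_of_le zero_le_one]
  have hint : IntegrableOn (f k) (Set.uIcc 0 1) :=
    Measure.integrableOn_of_bounded (M := 1) isCompact_uIcc.measure_lt_top.ne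
      (measurable_f k).aestronglyMeasurable
      (Filter.Eventually.of_forall fun x => abs_f_le k hk x)
  have hcont := intervalIntegral.continuousOn_primitive_interval_left hint 0 Set.left_mem_uIcc
  have hlim : Filter.Tendsto (fun ε : ℝ => ∫ x in ε..1, f k x) (nhdsWithin 0 (Set.Ioc 0 1))
      (nhds (∫ x in (0:ℝ)..1, f k x)) :=
    hcont.mono_left (nhdsWithin_mono _ (by
      rw [Set.uIcc_of_le zero_le_one]; exact Set.Ioc_subset_Icc_self))
  have hne : (nhdsWithin (0:ℝ) (Set.Ioc 0 1)).NeBot := by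
    rw [nhdsWithin_Ioc_eq_nhdsGT one_pos]; infer_instance
  have hlow : Filter.Tendsto (fun ε : ℝ => (Real.log k - (k - 1) * ε) / k)
      (nhdsWithin 0 (Set.Ioc 0 1)) (nhds (Real.log k / k)) := by
    have : Continuous (fun ε : ℝ => (Real.log k - (k - 1) * ε) / k) := by fun_prop
    have h := this.tendsto 0
    simp only [mul_zero, sub_zero] at h
    exact h.mono_left nhdsWithin_le_nhds
  refine tendsto_nhds_unique hlim
    (tendsto_of_tendsto_of_tendsto_of_le_of_le' hlow tendsto_const_nhds ?_ ?_)
  · filter_upwards [self_mem_nhdsWithin] with ε hε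
    rw [integral_f_eq k hk hε.1]
    exact div_le_div_of_nonneg_right (integral_floor_bounds k hk hε.1).1 (Nat.cast_nonneg k)
  · filter_upwards [self_mem_nhdsWithin] with ε hε
    rw [integral_f_eq k hk hε.1]
    exact div_le_div_of_nonneg_right (integral_floor_bounds k hk hε.1).2 (Nat.cast_nonneg k)
end

section
/- For all integers j, k ≥ 2, one has ⟨f_j, f_k⟩ = (1/k)·A(k/j) − (1/(jk))·A(k) − (1/(jk))·A(j) + (1/(jk))·A(1), where A(λ) := ∫₀^∞ {t}{λt} t^{−2} dt for λ > 0. -/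
/-!
For `x > 0` the integer parts cancel linearly: `f k x = {1/(kx)} - {1/x}/k`. For `k ≥ 2` this
vanishes when `x > 1`, so the inner product is an integral over the whole half-line, and `t = 1/x`
turns it into `∫₀^∞ ({t/j} - {t}/j) ({t/k} - {t}/k) t⁻² dt` (`ip_f_eq`). Expanding the product gives
four integrals of the form `∫₀^∞ {at}{bt} t⁻² dt`. Each converges, the integrand being at most
`min (ab) (1/t²)` (`integrableOn_fract_mul_fract_div_sq`), and equals `a A(b/a)` by scaling
(`integral_fract_mul_fract_div_sq`).
-/

open MeasureTheory

/-- The inner product of `L²(0,1)`: `⟨g,h⟩ = ∫₀¹ g(x)h(x) dx`. -/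
noncomputable def ip (g h : ℝ → ℝ) : ℝ := ∫ x in Set.Ioc (0:ℝ) 1, g x * h x

/-- `A(λ) = ∫₀^∞ {t}{λt}/t² dt`. -/
noncomputable def A (l : ℝ) : ℝ :=
  ∫ t in Set.Ioi (0:ℝ), Int.fract t * Int.fract (l * t) / t ^ 2

theorem integrableOn_fract_mul_fract_div_sq {a b : ℝ} (ha : 0 < a) (hb : 0 < b) :
    IntegrableOn (fun t : ℝ => Int.fract (a * t) * Int.fract (b * t) / t ^ 2) (Set.Ioi 0) := by
  have hm : Measurable (fun t : ℝ => Int.fract (a * t) * Int.fract (b * t) / t ^ 2) := by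
    fun_prop
  have fract_le {s : ℝ} (hs : 0 ≤ s) : Int.fract s ≤ s := by
    have : (0 : ℝ) ≤ ⌊s⌋ := by exact_mod_cast Int.floor_nonneg.mpr hs
    linarith [Int.floor_add_fract s]
  rw [← Set.Ioc_union_Ioi_eq_Ioi (zero_le_one' ℝ)]
  refine IntegrableOn.union ?_ ?_
  · refine Measure.integrableOn_of_bounded (M := a * b) (by simp) hm.aestronglyMeasurable ?_
    filter_upwards [ae_restrict_mem measurableSet_Ioc] with t ht
    have ht0 : 0 < t := ht.1
    rw [Real.norm_of_nonneg (by positivity), div_le_iff₀ (by positivity)]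
    calc Int.fract (a * t) * Int.fract (b * t) ≤ (a * t) * (b * t) :=
          mul_le_mul (fract_le (by positivity)) (fract_le (by positivity))
            (Int.fract_nonneg _) (by positivity)
      _ = a * b * t ^ 2 := by ring
  · have h2 : IntegrableOn (fun t : ℝ => t ^ (-2 : ℝ)) (Set.Ioi 1) :=
      integrableOn_Ioi_rpow_of_lt (by norm_num) one_pos
    refine Integrable.mono' h2 hm.aestronglyMeasurable ?_
    filter_upwards [ae_restrict_mem measurableSet_Ioi] with t ht
    have ht0 : 0 < t := one_pos.trans ht
    rw [Real.norm_of_nonneg (by positivity), Real.rpow_neg ht0.le, Real.rpow_two,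
      ← one_div]
    gcongr
    exact mul_le_one₀ (Int.fract_lt_one _).le (Int.fract_nonneg _) (Int.fract_lt_one _).le

theorem integral_fract_mul_fract_div_sq {a : ℝ} (ha : 0 < a) (b : ℝ) :
    ∫ t in Set.Ioi (0 : ℝ), Int.fract (a * t) * Int.fract (b * t) / t ^ 2 = a * A (b / a) := by
  have h := integral_comp_mul_left_Ioi
    (fun t : ℝ => Int.fract t * Int.fract (b / a * t) / t ^ 2) 0 ha
  rw [mul_zero, smul_eq_mul] at h
  have hA : A (b / a) = a * ∫ t in Set.Ioi (0 : ℝ),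
      Int.fract (a * t) * Int.fract (b / a * (a * t)) / (a * t) ^ 2 := by
    rw [h, A]; field_simp
  rw [hA, ← mul_assoc, ← integral_const_mul]
  refine setIntegral_congr_fun measurableSet_Ioi fun t ht => ?_
  have ht0 : t ≠ 0 := ne_of_gt ht
  have hab : b / a * (a * t) = b * t := by field_simp
  simp only [hab]
  field_simp

theorem f_eq_fract (k : ℕ) (x : ℝ) :
    f k x = Int.fract ((1 / (k : ℝ)) * x⁻¹) - Int.fract x⁻¹ / k := by
  have h : 1 / ((k : ℝ) * x) = 1 / (k : ℝ) * x⁻¹ := by rw [one_div, mul_inv, one_div]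
  rw [f, h, ← Int.self_sub_floor, ← Int.self_sub_floor, one_div x]
  ring

theorem f_eq_zero_of_one_lt {k : ℕ} (hk : 2 ≤ k) {x : ℝ} (hx : 1 < x) : f k x = 0 := by
  have hk' : (2 : ℝ) ≤ k := by exact_mod_cast hk
  have h1 : ⌊1 / x⌋ = 0 := by
    rw [Int.floor_eq_zero_iff]
    exact ⟨by positivity, by rw [div_lt_one (by positivity)]; exact hx⟩
  have h2 : ⌊1 / (k * x)⌋ = 0 := by
    rw [Int.floor_eq_zero_iff]
    exact ⟨by positivity, by rw [div_lt_one (by positivity)]; nlinarith⟩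
  rw [f, h1, h2]
  simp

theorem ip_f_eq {j k : ℕ} (hj : 2 ≤ j) :
    ip (f j) (f k) = ∫ t in Set.Ioi (0 : ℝ),
      (Int.fract ((1 / (j : ℝ)) * t) - Int.fract t / j) *
        (Int.fract ((1 / (k : ℝ)) * t) - Int.fract t / k) / t ^ 2 := by
  have h1 : ip (f j) (f k) = ∫ x in Set.Ioi (0 : ℝ), f j x * f k x := by
    refine (setIntegral_eq_of_subset_of_forall_sdiff_eq_zero measurableSet_Ioi
      (fun x hx => hx.1) fun x hx => ?_).symm
    have hx1 : 1 < x := by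
      by_contra! h
      exact hx.2 ⟨hx.1, h⟩
    rw [f_eq_zero_of_one_lt hj hx1, zero_mul]
  rw [h1, ← integral_comp_rpow_Ioi _ (show (-1 : ℝ) ≠ 0 by norm_num)]
  refine setIntegral_congr_fun measurableSet_Ioi fun x hx => ?_
  have hx0 : (0 : ℝ) < x := hx
  have e : x ^ ((-1 : ℝ) - 1) = (x ^ 2)⁻¹ := by
    rw [show (-1 : ℝ) - 1 = -2 by norm_num, Real.rpow_neg hx0.le, Real.rpow_two]
  simp only [f_eq_fract, e, Real.rpow_neg_one, smul_eq_mul, abs_neg, abs_one, one_mul]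
  field_simp

/-- `⟨f_j,f_k⟩ = (1/k)A(k/j) − (1/(jk))A(k) − (1/(jk))A(j) + (1/(jk))A(1)`. -/
theorem stmt_19 (j k : ℕ) (hj : 2 ≤ j) (hk : 2 ≤ k) :
    ip (f j) (f k) =
      (1 / (k : ℝ)) * A ((k : ℝ) / j) - (1 / ((j : ℝ) * k)) * A k
        - (1 / ((j : ℝ) * k)) * A j + (1 / ((j : ℝ) * k)) * A 1 := by
  have hj0 : (0 : ℝ) < j := by exact_mod_cast (by omega : 0 < j)
  have hk0 : (0 : ℝ) < k := by exact_mod_cast (by omega : 0 < k)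
  have hj1 : 0 < 1 / (j : ℝ) := by positivity
  have hk1 : 0 < 1 / (k : ℝ) := by positivity
  have I1 := integrableOn_fract_mul_fract_div_sq hk1 hj1
  have I2 := (integrableOn_fract_mul_fract_div_sq hk1 one_pos).const_mul (1 / (j : ℝ))
  have I3 := (integrableOn_fract_mul_fract_div_sq hj1 one_pos).const_mul (1 / (k : ℝ))
  have I4 := (integrableOn_fract_mul_fract_div_sq one_pos one_pos).const_mul (1 / ((j : ℝ) * k))
  have E1 := integral_fract_mul_fract_div_sq hk1 (1 / (j : ℝ))
  have E2 := integral_fract_mul_fract_div_sq hk1 1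
  have E3 := integral_fract_mul_fract_div_sq hj1 1
  have E4 := integral_fract_mul_fract_div_sq one_pos 1
  have r1 : 1 / (j : ℝ) / (1 / (k : ℝ)) = k / j := by field_simp
  rw [r1] at E1
  rw [one_div_one_div] at E2 E3
  rw [one_mul, div_one] at E4
  calc ip (f j) (f k)
      = ∫ t in Set.Ioi (0 : ℝ),
        (Int.fract (1 / (k : ℝ) * t) * Int.fract (1 / (j : ℝ) * t) / t ^ 2
          - 1 / (j : ℝ) * (Int.fract (1 / (k : ℝ) * t) * Int.fract (1 * t) / t ^ 2)
          - 1 / (k : ℝ) * (Int.fract (1 / (j : ℝ) * t) * Int.fract (1 * t) / t ^ 2)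
          + 1 / ((j : ℝ) * k) * (Int.fract (1 * t) * Int.fract (1 * t) / t ^ 2)) := by
        rw [ip_f_eq hj]
        congr 1
        funext t
        rw [one_mul]
        ring
    _ = _ := by
        have I12 := Integrable.sub' I1 I2
        rw [integral_add (I12.sub' I3) I4, integral_sub I12 I3, integral_sub I1 I2, integral_const_mul, integral_const_mul, integral_const_mul,
          E1, E2, E3, E4]
        ring
end
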